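/- Let 𝕏 ⊆ ℙ^n_K be a 0-dimensional scheme and 0 ≤ d ≤ r_𝕏 − 1. Then the following are equivalent: (a) 𝕏 has CBP(d); (b) for every maximal p_j-subscheme 𝕐 ⊆ 𝕏 and every standard set of separators {f_{j1},…,f_{jκ_j}} of 𝕐 in 𝕏, there exists k ∈ {1,…,κ_j} with x_0^{r_𝕏−d} ∤ f_{jk}; (c) for every p_j ∈ Supp(𝕏), every maximal p_j-subscheme 𝕐 ⊆ 𝕏 satisfies dim_K (I_{𝕐/𝕏})_d < κ_j. -/

import Mathlib

noncomputable section

/-! An algebraic model for a 0-dimensional subscheme `𝕏 ⊆ ℙⁿ_K` whose support avoids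
the hyperplane `Z(X₀)`.  The scheme is recorded through the local rings
`𝒪_{𝕏,p_j}` at the points `p_1, …, p_s` of its support, together with the germ map
sending a homogeneous polynomial `F` of degree `i` to the tuple of germs
`(F_{p_1}, …, F_{p_s})`; this is the degree-`i` component of the injection
`ĩ : R → Q^h(R) ≅ ∏_j 𝒪_{𝕏,p_j}[T_j, T_j⁻¹]`, where every graded component of
`Q^h(R)` is identified with `Γ = ∏_j 𝒪_{𝕏,p_j}` by dropping the powers of the `T_j`.
Since `x₀` has germ `1` at every point, the homogeneous coordinate ring
`R = P/I_𝕏` is faithfully encoded by the chain of subspaces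
`R_i ≅ V_i = germ(P_i) ⊆ Γ` (with `V_i ⊆ V_{i+1}`, and `V_i = Γ` for `i ≫ 0`). -/

/-- The data of one (fat) point of a 0-dimensional scheme: a finite local `K`-algebra. -/
structure PointData (K : Type) [Field K] : Type 1 where
  carrier : Type
  [ring : CommRing carrier]
  [alg : Algebra K carrier]
  [loc : IsLocalRing carrier]
  [findim : FiniteDimensional K carrier]

attribute [instance] PointData.ring PointData.alg PointData.loc PointData.findim

/-- A model of a 0-dimensional subscheme of `ℙⁿ_K`, no point of whose support lies
on `Z(X₀)` (coordinates being chosen so that each point has `X₀`-coordinate 1, the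
germ of `x₀` at every point is `1`). -/
structure ZeroDimScheme (K : Type) [Field K] (n : ℕ) : Type 1 where
  /-- the number of points in the support -/
  s : ℕ
  spos : 0 < s
  /-- the local rings `𝒪_{𝕏,p_j}` -/
  pt : Fin s → PointData K
  /-- the germ map: for `F` homogeneous of degree `i` this is the degree-`i`
  component of `ĩ : R → Q^h(R)`, i.e. `F ↦ (F_{p_1}, …, F_{p_s})` -/
  germ : MvPolynomial (Fin (n + 1)) K →ₐ[K] ∀ j, (pt j).carrier
  /-- the germ of `X₀` at each point is `1` -/
  germ_X0 : germ (MvPolynomial.X 0) = 1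
  /-- in all large degrees, the germ map is surjective onto `∏_j 𝒪_{𝕏,p_j}`
  (this characterizes `I_𝕏` as the full homogeneous vanishing ideal of the scheme) -/
  eventually_surj : ∃ N : ℕ, ∀ i, N ≤ i →
    Submodule.map germ.toLinearMap
      (MvPolynomial.homogeneousSubmodule (Fin (n + 1)) K i) = ⊤

namespace ZeroDimScheme

variable {K : Type} [Field K] {n : ℕ}

/-- `Γ = ∏_j 𝒪_{𝕏,p_j}`, the common model for every graded component of `Q^h(R)`. -/
abbrev Gamma (S : ZeroDimScheme K n) : Type := ∀ j, (S.pt j).carrier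

variable (S : ZeroDimScheme K n)

/-- `V i ⊆ Γ` is the image of the degree-`i` component `R_i` of the homogeneous
coordinate ring `R` under (the degree-`i` component of) `ĩ`; we identify `R_i ≅ V i`. -/
def V (i : ℕ) : Submodule K S.Gamma :=
  Submodule.map S.germ.toLinearMap
    (MvPolynomial.homogeneousSubmodule (Fin (n + 1)) K i)

/-- `R_i` for `i : ℤ` (zero in negative degrees). -/
def Vz (i : ℤ) : Submodule K S.Gamma := if 0 ≤ i then S.V i.toNat else ⊥

/-- `deg 𝕏 = Σ_j dim_K 𝒪_{𝕏,p_j}`. -/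
def degX : ℕ := Module.finrank K S.Gamma

/-- The Hilbert function `HF_𝕏(i) = dim_K R_i`. -/
def HF (i : ℕ) : ℕ := Module.finrank K (S.V i)

/-- The Hilbert function on `ℤ`. -/
def HFz (i : ℤ) : ℕ := Module.finrank K (S.Vz i)

/-- The regularity index `r_𝕏`: the least `r` with `HF_𝕏(i) = deg 𝕏` for all `i ≥ r`. -/
def rX : ℕ := sInf {r : ℕ | ∀ i, r ≤ i → S.HF i = S.degX}

/-- `κ_j = dim_K κ(p_j)`, the residue field of `𝕏` at `p_j`. -/
def kappa (j : Fin S.s) : ℕ :=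
  Module.finrank K
    ((S.pt j).carrier ⧸
      Submodule.restrictScalars K (IsLocalRing.maximalIdeal (S.pt j).carrier))

/-- `sj` is a socle element of `𝒪_{𝕏,p_j}`, i.e. `sj ∈ Ann(𝔪_{𝕏,p_j})`.  By
Proposition 1.2, the maximal `p_j`-subschemes `𝕐 ⊆ 𝕏` correspond 1-1 to the ideals
of `Γ` generated by `(0,…,0,sj,0,…,0)` with `sj` a *nonzero* socle element. -/
def IsSocle (j : Fin S.s) (sj : (S.pt j).carrier) : Prop :=
  ∀ b ∈ IsLocalRing.maximalIdeal (S.pt j).carrier, sj * b = 0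

/-- The ideal `U = ⟨(0,…,0,sj,0,…,0)⟩` of `Γ` corresponding to the maximal
`p_j`-subscheme `𝕐` determined by the socle element `sj`; one has `I_{𝕐/𝕏} = ĩ⁻¹(U)`. -/
def sepIdeal (j : Fin S.s) (sj : (S.pt j).carrier) : Submodule K S.Gamma :=
  Submodule.restrictScalars K (Ideal.span {(Pi.single j sj : S.Gamma)})

/-- The degree-`i` component `(I_{𝕐/𝕏})_i = R_i ∩ ĩ⁻¹(U)` of the ideal of the maximal
`p_j`-subscheme `𝕐` (given by the socle element `sj`) in `R`. -/
def IY (j : Fin S.s) (sj : (S.pt j).carrier) (i : ℕ) : Submodule K S.Gamma :=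
  S.V i ⊓ S.sepIdeal j sj

/-- `(I_{𝕐/𝕏})_i` for `i : ℤ`. -/
def IYz (j : Fin S.s) (sj : (S.pt j).carrier) (i : ℤ) : Submodule K S.Gamma :=
  S.Vz i ⊓ S.sepIdeal j sj

/-- The Hilbert function `HF_𝕐(i) = HF_𝕏(i) - dim_K (I_{𝕐/𝕏})_i` of the maximal
`p_j`-subscheme `𝕐` given by the socle element `sj`. -/
def HFY (j : Fin S.s) (sj : (S.pt j).carrier) (i : ℕ) : ℕ :=
  S.HF i - Module.finrank K (S.IY j sj i)

/-- `HF_𝕐` on `ℤ`. -/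
def HFYz (j : Fin S.s) (sj : (S.pt j).carrier) (i : ℤ) : ℕ :=
  S.HFz i - Module.finrank K (S.IYz j sj i)

/-- `α_{𝕐/𝕏} = min {i | (I_{𝕐/𝕏})_i ≠ 0}`. -/
def alphaY (j : Fin S.s) (sj : (S.pt j).carrier) : ℕ :=
  sInf {i : ℕ | S.IY j sj i ≠ ⊥}

/-- `μ(a) = min {i | (0,…,0,a T_j^i,0,…,0) ∈ ĩ(R)}` for `a ∈ 𝒪_{𝕏,p_j}`. -/
def mu (j : Fin S.s) (a : (S.pt j).carrier) : ℕ :=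
  sInf {i : ℕ | (Pi.single j a : S.Gamma) ∈ S.V i}

/-- `μ_{𝕐/𝕏}`, the maximal degree of a minimal separator of the maximal
`p_j`-subscheme `𝕐` given by the socle element `sj`; independently of all choices it
equals `max {μ(a·sj) | a ∈ 𝒪_{𝕏,p_j}, a·sj ≠ 0}`. -/
def muY (j : Fin S.s) (sj : (S.pt j).carrier) : ℕ :=
  sSup {m : ℕ | ∃ a : (S.pt j).carrier, a * sj ≠ 0 ∧ m = S.mu j (a * sj)}

/-- `deg_𝕏(p_j) = min {μ_{𝕐/𝕏} | 𝕐 a maximal p_j-subscheme of 𝕏}`. -/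
def degP (j : Fin S.s) : ℕ :=
  sInf {m : ℕ | ∃ sj : (S.pt j).carrier, S.IsSocle j sj ∧ sj ≠ 0 ∧ m = S.muY j sj}

/-- `𝕏` has the Cayley–Bacharach property of degree `d`: `deg_𝕏(p_j) ≥ d + 1` for all `j`. -/
def CBP (d : ℕ) : Prop := ∀ j : Fin S.s, d + 1 ≤ S.degP j

/-- `𝕏` is a Cayley–Bacharach scheme: it has `CBP(r_𝕏 - 1)`. -/
def CayleyBacharach : Prop := S.CBP (S.rX - 1)

/-- The residue class map `𝒪_{𝕏,p_j} → κ(p_j)` as a `K`-linear map. -/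
def resQ (j : Fin S.s) :
    (S.pt j).carrier →ₗ[K]
      ((S.pt j).carrier ⧸
        Submodule.restrictScalars K (IsLocalRing.maximalIdeal (S.pt j).carrier)) :=
  (Submodule.restrictScalars K (IsLocalRing.maximalIdeal (S.pt j).carrier)).mkQ

/-- The residue classes of `e 0, …, e (κ_j - 1)` form a `K`-basis of `κ(p_j)`. -/
def IsResidueBasis (j : Fin S.s) {m : ℕ} (e : Fin m → (S.pt j).carrier) : Prop :=
  LinearIndependent K (fun k => S.resQ j (e k)) ∧
    Submodule.span K (Set.range fun k => S.resQ j (e k)) = ⊤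

/-- A family `τ_j : 𝒪_{𝕏,p_j} → K` of trace maps: each `τ_j` is a generator of
`Hom_K(𝒪_{𝕏,p_j}, K)` as an `𝒪_{𝕏,p_j}`-module.  Such a family exists iff `𝕏` is
locally Gorenstein, and it induces a homogeneous trace map `σ` of degree zero of
`Q^h(R)/L₀` (componentwise). -/
def IsTraceFamily (τ : ∀ j, (S.pt j).carrier →ₗ[K] K) : Prop :=
  ∀ j, Function.Bijective
    (fun a : (S.pt j).carrier => (τ j).comp (LinearMap.mulRight K a))

/-- The total trace `Γ → K`, `y ↦ Σ_j τ_j (y_j)`; on the degree-`i` component of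
`Q^h(R)` the trace map `σ` is `q ↦ (Ttot τ q)·x₀^i`. -/
def Ttot (τ : ∀ j, (S.pt j).carrier →ₗ[K] K) : S.Gamma →ₗ[K] K :=
  ∑ j : Fin S.s, (τ j).comp (LinearMap.proj j)

/-- The degree-`k` component `(𝔠^σ_𝕏)_k ⊆ Q^h(R)_k ≅ Γ` of the Dedekind complementary
module: `g ∈ (𝔠^σ_𝕏)_k` iff `σ(g · R) ⊆ K[x₀]`, i.e. `Ttot τ (g·x) = 0` whenever
`x ∈ R_i` with `k + i < 0`. -/
def Cmod (τ : ∀ j, (S.pt j).carrier →ₗ[K] K) (k : ℤ) : Submodule K S.Gamma :=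
  ⨅ (i : ℕ) (_ : k + (i : ℤ) < 0) (x : S.Gamma) (_ : x ∈ S.V i),
    LinearMap.ker ((S.Ttot τ).comp (LinearMap.mulRight K x))

/-- The degree-`i` component `(δ^σ_𝕏)_i ⊆ Q^h(R)_i ≅ Γ` of the Dedekind different
`δ^σ_𝕏 = {f ∈ Q^h(R) | f · 𝔠^σ_𝕏 ⊆ R}`. -/
def delta (τ : ∀ j, (S.pt j).carrier →ₗ[K] K) (i : ℤ) : Submodule K S.Gamma :=
  ⨅ (k : ℤ) (g : S.Gamma) (_ : g ∈ S.Cmod τ k),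
    Submodule.comap (LinearMap.mulRight K g) (S.Vz (i + k))

/-- The Hilbert function of the Dedekind different. -/
def HFdelta (τ : ∀ j, (S.pt j).carrier →ₗ[K] K) (i : ℤ) : ℕ :=
  Module.finrank K (S.delta τ i)

/-- `𝕏` has minimal Dedekind different: `δ^σ_𝕏 = ⊕_{i ≥ 2 r_𝕏} R_i`
(recall `R_i ≅ Γ` for `i ≥ r_𝕏`). -/
def MinimalDedekind (τ : ∀ j, (S.pt j).carrier →ₗ[K] K) : Prop :=
  ∀ i : ℤ, S.delta τ i = if 2 * (S.rX : ℤ) ≤ i then ⊤ else ⊥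

/-- The degree-`i` component (`i ≥ 0`) of the conductor
`𝔉_{R̃/R} = {f ∈ R̃ | f·R̃ ⊆ R}` of `R` in `R̃ = ∏_j 𝒪_{𝕏,p_j}[T_j]`
(whose degree-`i` component is all of `Γ` for every `i ≥ 0`). -/
def cond (i : ℕ) : Submodule K S.Gamma :=
  ⨅ y : S.Gamma, Submodule.comap (LinearMap.mulRight K y) (S.V i)

/-- The conductor on `ℤ` (zero in negative degrees, where `R̃` vanishes). -/
def condZ (i : ℤ) : Submodule K S.Gamma := if 0 ≤ i then S.cond i.toNat else ⊥

/-- The degree-`i` component of the trace `tr(𝔠^σ_𝕏) = δ^σ_𝕏 · 𝔠^σ_𝕏` of the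
Dedekind complementary module. -/
def trC (τ : ∀ j, (S.pt j).carrier →ₗ[K] K) (i : ℤ) : Submodule K S.Gamma :=
  ⨆ (a : ℤ) (b : ℤ) (_ : a + b = i), S.delta τ a * S.Cmod τ b

/-- `𝕏` is nearly Gorenstein: `𝔪 ⊆ tr(𝔠^σ_𝕏)`. -/
def NearlyGorenstein (τ : ∀ j, (S.pt j).carrier →ₗ[K] K) : Prop :=
  ∀ i : ℤ, 1 ≤ i → S.Vz i ≤ S.trC τ i

/-- `𝕏` is almost Gorenstein: there is an exact sequence of graded `R`-modules
`0 → R → 𝔠^σ_𝕏(-r_𝕏) → C → 0` with `𝔪·C = 0`.  A degree-zero graded injection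
`R → 𝔠^σ_𝕏(-r_𝕏)` is multiplication by an element `g ∈ (𝔠^σ_𝕏)_{-r_𝕏}` with
`Ann_R(g) = 0`, and `𝔪·C = 0` means `𝔪 · 𝔠^σ_𝕏(-r_𝕏) ⊆ g·R`. -/
def AlmostGorenstein (τ : ∀ j, (S.pt j).carrier →ₗ[K] K) : Prop :=
  ∃ g ∈ S.Cmod τ (-(S.rX : ℤ)),
    (∀ i : ℕ, ∀ x ∈ S.V i, x * g = 0 → x = 0) ∧
    (∀ a : ℕ, 1 ≤ a → ∀ x ∈ S.V a, ∀ k : ℤ, ∀ h ∈ S.Cmod τ k,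
      x * h ∈ Submodule.map (LinearMap.mulRight K g) (S.Vz ((a : ℤ) + k + (S.rX : ℤ))))

/-- `𝕏` is arithmetically Gorenstein, i.e. `R` is a Gorenstein ring; equivalently the
canonical module is free of rank one: `𝔠^σ_𝕏 = g·R` for some `g ∈ (𝔠^σ_𝕏)_{-r_𝕏}`. -/
def ArithGorenstein (τ : ∀ j, (S.pt j).carrier →ₗ[K] K) : Prop :=
  ∃ g ∈ S.Cmod τ (-(S.rX : ℤ)),
    ∀ k : ℤ, S.Cmod τ k = Submodule.map (LinearMap.mulRight K g) (S.Vz (k + (S.rX : ℤ)))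

/-- `𝕏` is level: the socle of `R̄ = R/⟨x₀⟩` equals `R̄_{r_𝕏}`, i.e. no nonzero
homogeneous element of `R̄` of degree `< r_𝕏` is annihilated by `𝔪̄` (recall
`R̄_i ≅ V i / V (i-1)` and `x₀`-multiplication preserves germs). -/
def Level : Prop :=
  ∀ i : ℕ, i < S.rX → ∀ x ∈ S.V i,
    (∀ a : ℕ, 1 ≤ a → ∀ y ∈ S.V a, x * y ∈ S.Vz ((i : ℤ) + (a : ℤ) - 1)) →
      x ∈ S.Vz ((i : ℤ) - 1)

/-- The subspace `{x ∈ Γ | x_k = 0 for k ≠ j}` of `Γ`: the degreewise model for the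
ideal of the subscheme `𝕐_j ⊆ 𝕏` with `I_{𝕐_j} = ∩_{k ≠ j} I_k`. -/
def Wj (j : Fin S.s) : Submodule K S.Gamma :=
  ⨅ (k : Fin S.s) (_ : k ≠ j),
    LinearMap.ker (LinearMap.proj k : S.Gamma →ₗ[K] (S.pt k).carrier)

/-- `(I_{𝕐_j/𝕏})_i` for the subscheme `𝕐_j` complementary to `p_j`. -/
def IW (j : Fin S.s) (i : ℕ) : Submodule K S.Gamma := S.V i ⊓ S.Wj j

/-- The Hilbert function of the subscheme `𝕐_j` complementary to `p_j`. -/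
def HFW (j : Fin S.s) (i : ℕ) : ℕ := S.HF i - Module.finrank K (S.IW j i)

/-- `α_{𝕐_j/𝕏}` for the subscheme `𝕐_j` complementary to `p_j`. -/
def alphaW (j : Fin S.s) : ℕ := sInf {i : ℕ | S.IW j i ≠ ⊥}

/-- The subspace `{x ∈ Γ | x_k = 0 for k ∉ {j₁, j₂}}` of `Γ`: the degreewise model for
the ideal in `R` of the subscheme of the reduced scheme `𝕏` complementary to `{p_{j₁}, p_{j₂}}`. -/
def Wpair (j1 j2 : Fin S.s) : Submodule K S.Gamma :=
  ⨅ (k : Fin S.s) (_ : k ≠ j1) (_ : k ≠ j2),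
    LinearMap.ker (LinearMap.proj k : S.Gamma →ₗ[K] (S.pt k).carrier)

/-- The homogeneous vanishing ideal `I_𝕏 ⊆ P`. -/
def IX : Ideal (MvPolynomial (Fin (n + 1)) K) :=
  Ideal.span {F | (∃ i : ℕ, F ∈ MvPolynomial.homogeneousSubmodule (Fin (n + 1)) K i) ∧
    S.germ F = 0}

/-- The `n×n`-minor (Jacobian determinant with respect to `X_1, …, X_n`) of an
`n`-tuple of polynomials. -/
def jacMinor (Fs : Fin n → MvPolynomial (Fin (n + 1)) K) : MvPolynomial (Fin (n + 1)) K :=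
  Matrix.det (Matrix.of fun a b : Fin n => MvPolynomial.pderiv (Fin.succ b) (Fs a))

/-- The preimage in `P` of the Kähler different `ϑ_𝕏 ⊆ R`: the ideal generated by
`I_𝕏` together with all `n×n` minors of the Jacobian matrix of elements of `I_𝕏`. -/
def KaehlerIdeal : Ideal (MvPolynomial (Fin (n + 1)) K) :=
  S.IX ⊔ Ideal.span {m | ∃ Fs : Fin n → MvPolynomial (Fin (n + 1)) K,
    (∀ a, Fs a ∈ S.IX) ∧ m = jacMinor Fs}

/-- The degree-`i` component of the Kähler different `ϑ_𝕏 ⊆ R`, viewed inside `Γ`. -/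
def thetaPiece (i : ℕ) : Submodule K S.Gamma :=
  Submodule.map S.germ.toLinearMap
    (Submodule.restrictScalars K S.KaehlerIdeal ⊓
      MvPolynomial.homogeneousSubmodule (Fin (n + 1)) K i)

end ZeroDimScheme

end
namespace ZeroDimScheme

theorem aux_V_mono {K : Type} [Field K] {n : ℕ} (S : ZeroDimScheme K n) : Monotone S.V := by
  refine monotone_nat_of_le_succ fun i => ?_
  rintro _ ⟨F, hF, rfl⟩
  refine ⟨F * MvPolynomial.X 0, ?_, ?_⟩
  · exact MvPolynomial.IsHomogeneous.mul hF (MvPolynomial.isHomogeneous_X K 0)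
  · change S.germ (F * MvPolynomial.X 0) = S.germ F
    rw [map_mul, S.germ_X0, mul_one]

theorem aux_V_top {K : Type} [Field K] {n : ℕ} (S : ZeroDimScheme K n) :
    ∃ N, S.V N = ⊤ := by
  obtain ⟨N, hN⟩ := S.eventually_surj
  exact ⟨N, hN N le_rfl⟩

theorem aux_mu_le {K : Type} [Field K] {n : ℕ} (S : ZeroDimScheme K n) (j : Fin S.s)
    (a : (S.pt j).carrier) (d : ℕ) :
    S.mu j a ≤ d ↔ (Pi.single j a : S.Gamma) ∈ S.V d := by
  constructor
  · intro h
    obtain ⟨N, hN⟩ := S.aux_V_top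
    have hne : {i : ℕ | (Pi.single j a : S.Gamma) ∈ S.V i}.Nonempty :=
      ⟨N, by simp [hN]⟩
    exact S.aux_V_mono h (Nat.sInf_mem hne)
  · intro h
    exact Nat.sInf_le h

theorem aux_muY_le {K : Type} [Field K] {n : ℕ} (S : ZeroDimScheme K n) (j : Fin S.s)
    (sj : (S.pt j).carrier) (d : ℕ) :
    S.muY j sj ≤ d ↔ ∀ a, (Pi.single j (a * sj) : S.Gamma) ∈ S.V d := by
  obtain ⟨N, hN⟩ := S.aux_V_top
  constructor
  · intro h a
    by_cases ha : a * sj = 0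
    · rw [ha, Pi.single_zero]; exact zero_mem _
    · rw [← aux_mu_le]
      have hb : BddAbove
          {m : ℕ | ∃ a : (S.pt j).carrier, a * sj ≠ 0 ∧ m = S.mu j (a * sj)} := by
        refine ⟨N, ?_⟩
        rintro _ ⟨b, _, rfl⟩
        rw [aux_mu_le, hN]; trivial
      exact le_trans (le_csSup hb ⟨a, ha, rfl⟩) h
  · intro h
    unfold muY
    rcases Set.eq_empty_or_nonempty
      {m : ℕ | ∃ a : (S.pt j).carrier, a * sj ≠ 0 ∧ m = S.mu j (a * sj)} with he | he
    · rw [he]; simp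
    · refine csSup_le he ?_
      rintro _ ⟨b, _, rfl⟩
      rw [aux_mu_le]; exact h b

theorem aux_socle {K : Type} [Field K] {n : ℕ} (S : ZeroDimScheme K n) (j : Fin S.s) :
    ∃ sj : (S.pt j).carrier, S.IsSocle j sj ∧ sj ≠ 0 := by
  have : IsArtinianRing (S.pt j).carrier := IsArtinianRing.of_finite K _
  obtain ⟨p, hp⟩ := associatedPrimes.nonempty (S.pt j).carrier (S.pt j).carrier
  obtain ⟨hprime, x, hx⟩ := isAssociatedPrime_iff.1 hp
  have hm : p.IsMaximal := IsArtinianRing.isMaximal_of_isPrime p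
  have hpm := IsLocalRing.eq_maximalIdeal hm
  refine ⟨x, fun b hb => ?_, ?_⟩
  · rw [← hpm, hx, Submodule.mem_colon_singleton] at hb
    simpa [mul_comm] using hb
  · rintro rfl
    refine hprime.ne_top ((Ideal.eq_top_iff_one p).2 ?_)
    rw [hx, Submodule.mem_colon_singleton]
    simp

theorem aux_CBP {K : Type} [Field K] {n : ℕ} (S : ZeroDimScheme K n) (d : ℕ) :
    S.CBP d ↔ ∀ (j : Fin S.s) (sj : (S.pt j).carrier), S.IsSocle j sj → sj ≠ 0 →
      ¬ ∀ a, (Pi.single j (a * sj) : S.Gamma) ∈ S.V d := by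
  constructor
  · intro h j sj h1 h2 h3
    rw [← aux_muY_le] at h3
    have h4 : S.degP j ≤ S.muY j sj := Nat.sInf_le ⟨sj, h1, h2, rfl⟩
    have := h j
    omega
  · intro h j
    obtain ⟨s0, h1, h2⟩ := S.aux_socle j
    refine le_csInf ⟨_, s0, h1, h2, rfl⟩ ?_
    rintro _ ⟨sj, h3, h4, rfl⟩
    have := h j sj h3 h4
    rw [← aux_muY_le] at this
    omega

/-- The map `a ↦ single j (a * sj)`. -/
def auxPhi {K : Type} [Field K] {n : ℕ} (S : ZeroDimScheme K n) (j : Fin S.s)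
    (sj : (S.pt j).carrier) : (S.pt j).carrier →ₗ[K] S.Gamma :=
  (LinearMap.single K (fun j => (S.pt j).carrier) j).comp (LinearMap.mulRight K sj)

theorem auxPhi_apply {K : Type} [Field K] {n : ℕ} (S : ZeroDimScheme K n) (j : Fin S.s)
    (sj a : (S.pt j).carrier) : S.auxPhi j sj a = Pi.single j (a * sj) := rfl

theorem auxPhi_ker {K : Type} [Field K] {n : ℕ} (S : ZeroDimScheme K n) (j : Fin S.s)
    (sj : (S.pt j).carrier) (h1 : S.IsSocle j sj) (h2 : sj ≠ 0) :
    LinearMap.ker (S.auxPhi j sj) =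
      Submodule.restrictScalars K (IsLocalRing.maximalIdeal (S.pt j).carrier) := by
  ext a
  rw [LinearMap.mem_ker, auxPhi_apply, Pi.single_eq_zero_iff, Submodule.restrictScalars_mem,
    IsLocalRing.mem_maximalIdeal, mem_nonunits_iff]
  constructor
  · intro h hu
    exact h2 (hu.mul_right_eq_zero.1 h)
  · intro h
    rw [mul_comm]
    exact h1 a ((IsLocalRing.mem_maximalIdeal a).2 h)

theorem auxPhi_range {K : Type} [Field K] {n : ℕ} (S : ZeroDimScheme K n) (j : Fin S.s)
    (sj : (S.pt j).carrier) : LinearMap.range (S.auxPhi j sj) = S.sepIdeal j sj := by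
  ext x
  rw [LinearMap.mem_range, sepIdeal, Submodule.restrictScalars_mem, Ideal.mem_span_singleton']
  constructor
  · rintro ⟨a, rfl⟩
    exact ⟨Pi.single j a, by rw [auxPhi_apply, Pi.single_mul]⟩
  · rintro ⟨a, rfl⟩
    refine ⟨a j, ?_⟩
    rw [auxPhi_apply]
    ext k
    by_cases hk : k = j
    · subst hk; simp
    · simp [hk]

theorem aux_finrank {K : Type} [Field K] {n : ℕ} (S : ZeroDimScheme K n) (j : Fin S.s)
    (sj : (S.pt j).carrier) (h1 : S.IsSocle j sj) (h2 : sj ≠ 0) :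
    Module.finrank K (S.sepIdeal j sj) = S.kappa j := by
  rw [← auxPhi_range, kappa, ← S.auxPhi_ker j sj h1 h2]
  exact ((S.auxPhi j sj).quotKerEquivRange.finrank_eq).symm

theorem aux_c {K : Type} [Field K] {n : ℕ} (S : ZeroDimScheme K n) (j : Fin S.s)
    (sj : (S.pt j).carrier) (h1 : S.IsSocle j sj) (h2 : sj ≠ 0) (d : ℕ) :
    Module.finrank K (S.IY j sj d) < S.kappa j ↔
      ¬ ∀ a, (Pi.single j (a * sj) : S.Gamma) ∈ S.V d := by
  rw [← S.aux_finrank j sj h1 h2]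
  have key : (∀ a, (Pi.single j (a * sj) : S.Gamma) ∈ S.V d) ↔ S.sepIdeal j sj ≤ S.V d := by
    rw [← auxPhi_range]
    constructor
    · rintro h _ ⟨a, rfl⟩
      exact h a
    · intro h a
      exact h ⟨a, rfl⟩
  rw [key]
  constructor
  · intro h h3
    rw [IY, inf_eq_right.2 h3] at h
    exact lt_irrefl _ h
  · intro h
    refine Submodule.finrank_lt_finrank_of_lt (lt_of_le_of_ne inf_le_right ?_)
    intro h3
    exact h (inf_eq_right.1 h3)

theorem aux_b {K : Type} [Field K] {n : ℕ} (S : ZeroDimScheme K n) (j : Fin S.s)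
    (sj : (S.pt j).carrier) (h1 : S.IsSocle j sj) (h2 : sj ≠ 0) (d : ℕ)
    (e : Fin (S.kappa j) → (S.pt j).carrier) (he : S.IsResidueBasis j e) 
    (h : ∀ k, (Pi.single j (e k * sj) : S.Gamma) ∈ S.V d) (a : (S.pt j).carrier) :
    (Pi.single j (a * sj) : S.Gamma) ∈ S.V d := by
  have ha : S.resQ j a ∈ Submodule.span K (Set.range fun k => S.resQ j (e k)) := by
    rw [he.2]; trivial
  rw [Submodule.mem_span_range_iff_exists_fun] at ha
  obtain ⟨c, hc⟩ := ha
  have hk : a - ∑ k, c k • e k ∈ LinearMap.ker (S.auxPhi j sj) := by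
    rw [S.auxPhi_ker j sj h1 h2, ← Submodule.ker_mkQ
      (Submodule.restrictScalars K (IsLocalRing.maximalIdeal (S.pt j).carrier))]
    change S.resQ j _ = 0
    rw [map_sub, ← hc, map_sum]
    simp
  rw [LinearMap.mem_ker, map_sub, sub_eq_zero] at hk
  rw [← auxPhi_apply, hk, map_sum]
  refine Submodule.sum_mem _ fun k _ => ?_
  rw [map_smul]
  exact Submodule.smul_mem _ _ (h k)

theorem aux_basis {K : Type} [Field K] {n : ℕ} (S : ZeroDimScheme K n) (j : Fin S.s) :
    ∃ e : Fin (S.kappa j) → (S.pt j).carrier, S.IsResidueBasis j e := by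
  let b := Module.finBasis K ((S.pt j).carrier ⧸
      Submodule.restrictScalars K (IsLocalRing.maximalIdeal (S.pt j).carrier))
  have hs : Function.Surjective (S.resQ j) := Submodule.mkQ_surjective _
  choose g hg using hs
  refine ⟨fun k => g (b k), ?_⟩
  unfold IsResidueBasis
  simp only [hg]
  exact ⟨b.linearIndependent, b.span_eq⟩

end ZeroDimScheme

/-- Proposition 4.3 / `propSec3.3`.  Let `𝕏 ⊆ ℙⁿ_K` be a
0-dimensional scheme and `0 ≤ d ≤ r_𝕏 - 1`.  Then the following are equivalent:
(a) `𝕏` has `CBP(d)`;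
(b) for every maximal `p_j`-subscheme `𝕐 ⊆ 𝕏` (socle element `sj`) and every
standard set of separators `{f_{j1}, …, f_{jκ_j}}` of `𝕐` in `𝕏` (determined by a
system `e` of residue representatives forming a basis of `κ(p_j)`), there is a `k`
with `x₀^{r_𝕏 - d} ∤ f_{jk}`; since `f_{jk}` is homogeneous of degree `r_𝕏` with
germ `Pi.single j (e k * sj)`, non-divisibility by `x₀^{r_𝕏-d}` says exactly that
this germ does not lie in `V d ≅ R_d`;
(c) for all `p_j ∈ Supp 𝕏`, every maximal `p_j`-subscheme `𝕐 ⊆ 𝕏` satisfies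
`dim_K (I_{𝕐/𝕏})_d < κ_j`. -/
theorem dedekind_CB_stmt5 (K : Type) [Field K] (n : ℕ) (S : ZeroDimScheme K n)
    (d : ℕ) (hd : d + 1 ≤ S.rX) :
    (S.CBP d ↔
      ∀ (j : Fin S.s) (sj : (S.pt j).carrier), S.IsSocle j sj → sj ≠ 0 →
        ∀ e : Fin (S.kappa j) → (S.pt j).carrier, S.IsResidueBasis j e →
          ∃ k : Fin (S.kappa j), (Pi.single j (e k * sj) : S.Gamma) ∉ S.V d) ∧
    (S.CBP d ↔
      ∀ (j : Fin S.s) (sj : (S.pt j).carrier), S.IsSocle j sj → sj ≠ 0 →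
        Module.finrank K (S.IY j sj d) < S.kappa j) := by
  constructor
  · rw [S.aux_CBP]
    constructor
    · intro h j sj h1 h2 e he
      by_contra hcon
      push Not at hcon
      exact h j sj h1 h2 (S.aux_b j sj h1 h2 d e he hcon)
    · intro h j sj h1 h2 hall
      obtain ⟨e, he⟩ := S.aux_basis j
      obtain ⟨k, hk⟩ := h j sj h1 h2 e he
      exact hk (hall _)
  · rw [S.aux_CBP]
    constructor
    · intro h j sj h1 h2
      exact (S.aux_c j sj h1 h2 d).2 (h j sj h1 h2)
    · intro h j sj h1 h2
      exact (S.aux_c j sj h1 h2 d).1 (h j sj h1 h2)
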